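/- Let n be a positive natural number, U a real n × n matrix, and b : Fin n → ℝ. Define Φ : (Fin n → ℝ) → (Fin n → ℝ) by Φ(u)(i) = σ((U · u + b)(i)) · tanh(u(i)), where σ(x) = 1/(1 + exp(−x)). Then for every initial state u₀ : Fin n → ℝ, the iterates u_t = Φ^[t](u₀) converge to the zero vector: lim_{t → ∞} u_t = 0. In other words, the zero state is a global attractor of the dynamical system induced by the CFN. -/

import Mathlib

lemma sinh_le_mul_cosh_aux {x : ℝ} (hx : 0 ≤ x) : Real.sinh x ≤ x * Real.cosh x := by
  have hmono : MonotoneOn (fun y : ℝ => y * Real.cosh y - Real.sinh y) (Set.Ici 0) := by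
    have hd : ∀ y : ℝ, HasDerivAt (fun y : ℝ => y * Real.cosh y - Real.sinh y)
        (1 * Real.cosh y + y * Real.sinh y - Real.cosh y) y := fun y =>
      ((hasDerivAt_id y).mul (Real.hasDerivAt_cosh y)).sub (Real.hasDerivAt_sinh y)
    apply monotoneOn_of_deriv_nonneg (convex_Ici 0)
    · exact fun y _ => (hd y).continuousAt.continuousWithinAt
    · exact fun y _ => (hd y).differentiableAt.differentiableWithinAt
    · intro y hy
      rw [interior_Ici] at hy
      have hy' : 0 ≤ y := le_of_lt hy
      rw [(hd y).deriv]
      have := mul_nonneg hy' (Real.sinh_nonneg_iff.mpr hy')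
      linarith
  have := hmono (Set.mem_Ici.mpr le_rfl) (Set.mem_Ici.mpr hx) hx
  simp at this
  linarith

lemma abs_tanh_le_abs_aux (x : ℝ) : |Real.tanh x| ≤ |x| := by
  rw [Real.tanh_eq_sinh_div_cosh, abs_div, abs_of_pos (Real.cosh_pos x),
    div_le_iff₀ (Real.cosh_pos x), Real.abs_sinh, ← Real.cosh_abs x]
  exact sinh_le_mul_cosh_aux (abs_nonneg x)

/-- Lemma 2 of the paper: the zero state is a global attractor of the dynamical
system induced by the CFN. For `Φ(u)(i) = σ((U·u + b)(i)) * tanh(u(i))` with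
`σ` the logistic sigmoid, every forward orbit `u_t = Φ^[t](u₀)` converges to
the zero vector. -/
theorem cfn_zero_global_attractor (n : ℕ) (hn : 0 < n)
    (U : Matrix (Fin n) (Fin n) ℝ) (b : Fin n → ℝ)
    (Φ : (Fin n → ℝ) → (Fin n → ℝ))
    (hΦ : ∀ u i, Φ u i = (1 / (1 + Real.exp (-(U.mulVec u + b) i))) * Real.tanh (u i))
    (u₀ : Fin n → ℝ) :
    Filter.Tendsto (fun t => Φ^[t] u₀) Filter.atTop (nhds 0) := by
  obtain ⟨C, hC⟩ := (isCompact_closedBall (0 : Fin n → ℝ) ‖u₀‖).exists_bound_of_continuousOn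
    (f := fun u => U.mulVec u + b) (by fun_prop)
  set q : ℝ := 1 / (1 + Real.exp (-C)) with hq
  have hq0 : 0 ≤ q := by positivity
  have hq1 : q < 1 := by
    rw [hq, div_lt_one (by positivity)]
    linarith [Real.exp_pos (-C)]
  have step : ∀ u : Fin n → ℝ, ‖u‖ ≤ ‖u₀‖ → ‖Φ u‖ ≤ q * ‖u‖ := by
    intro u hu
    refine (pi_norm_le_iff_of_nonneg (by positivity)).mpr fun i => ?_
    have h1 : (U.mulVec u + b) i ≤ C :=
      (le_abs_self _).trans ((norm_le_pi_norm (U.mulVec u + b) i).trans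
        (hC u (by simpa using hu)))
    have h2 : 1 / (1 + Real.exp (-(U.mulVec u + b) i)) ≤ q := by
      apply one_div_le_one_div_of_le (by positivity)
      have := Real.exp_le_exp.mpr (neg_le_neg h1)
      linarith
    have h3 : |u i| ≤ ‖u‖ := norm_le_pi_norm u i
    rw [hΦ, Real.norm_eq_abs, abs_mul, abs_of_pos (by positivity)]
    exact mul_le_mul h2 ((abs_tanh_le_abs_aux _).trans h3) (abs_nonneg _) hq0
  have main : ∀ t : ℕ, ‖Φ^[t] u₀‖ ≤ q ^ t * ‖u₀‖ := by
    intro t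
    induction t with
    | zero => simp
    | succ t ih =>
      rw [Function.iterate_succ_apply']
      have h1 : ‖Φ^[t] u₀‖ ≤ ‖u₀‖ :=
        ih.trans (mul_le_of_le_one_left (norm_nonneg _) (pow_le_one₀ hq0 hq1.le))
      calc _ ≤ q * ‖Φ^[t] u₀‖ := step _ h1
        _ ≤ q * (q ^ t * ‖u₀‖) := by gcongr
        _ = _ := by ring
  refine squeeze_zero_norm main ?_
  simpa using (tendsto_pow_atTop_nhds_zero_of_lt_one hq0 hq1).mul_const ‖u₀‖
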